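/- Let ω ∈ ℝ^d be Diophantine with parameters c > 0 and τ > d−1, i.e. |ω·k| ≥ c/|k|^τ for all nonzero k ∈ ℤ^d. Let g be real analytic on the torus 𝕋^d with zero average, admitting a bounded holomorphic extension to the complex strip {|Im z| ≤ Δ}. Then for every 0 < δ < Δ there exists a unique zero-average function f, holomorphic on the strip {|Im z| ≤ Δ−δ}, such that Σ_{i=1}^d ω_i ∂f/∂θ_i = g. -/

import Mathlib

open MeasureTheory Real Complex

noncomputable section

/-- The complex strip `A_Δ = {z ∈ ℂ^d : |Im z| ≤ Δ}` (sup norm on the imaginary part). -/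
def strip (d : ℕ) (Δ : ℝ) : Set (Fin d → ℂ) := {z | ∀ i, |(z i).im| ≤ Δ}

/-- `2π`-periodicity in each real direction. -/
def Per (d : ℕ) (f : (Fin d → ℂ) → ℂ) : Prop :=
  ∀ z : Fin d → ℂ, ∀ k : Fin d → ℤ, f (z + fun i => 2 * π * (k i : ℂ)) = f z

/-- Zero average over the torus `[0,2π]^d`. -/
def ZeroAvg (d : ℕ) (f : (Fin d → ℂ) → ℂ) : Prop :=
  (∫ θ in Set.Icc (0 : Fin d → ℝ) (fun _ => 2 * π), f (fun i => (θ i : ℂ))) = 0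

/-- `f` is a zero-average holomorphic periodic solution of `L_ω f = g` on the strip of width `Δ'`. -/
def IsSol (d : ℕ) (Δ' : ℝ) (ω : Fin d → ℝ) (g f : (Fin d → ℂ) → ℂ) : Prop :=
  (∀ z ∈ strip d Δ', DifferentiableAt ℂ f z) ∧ Per d f ∧ ZeroAvg d f ∧
  ∀ z ∈ strip d Δ', fderiv ℂ f z (fun i => (ω i : ℂ)) = g z

/-!
Expand `g = ∑ ĝ_k e^{i k·z}`. Integrals over the horizontal slices of the strip do not depend on
the slice, and moving the slice to `Im z = -Δ sign k` gives `|ĝ_k| ≤ M e^{-Δ |k|₁}`. Dividing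
termwise by the small divisors `i ω·k`, which are at least `K e^{-ε |k|₁}`, only costs `ε` in the
exponential decay, so `∑ ĝ_k / (i ω·k) e^{i k·z}` is holomorphic on the smaller strip and solves
the equation. Conversely, the difference `v` of two solutions is constant along `ω`. Translation
by `π ω / (ω·k)` multiplies the `k`-th Fourier coefficient of `v` on a slice by `-1`, so it
vanishes for `k ≠ 0` and `v` is constant on each slice, hence constant by holomorphy, hence zero.
-/

section Torus

variable {ι : Type*}

/-- The projection of the real vectors onto the torus `(ℝ/ℤ)^ι`. -/
def toTorus (s : ι → ℝ) : UnitAddTorus ι := fun i => (s i : UnitAddCircle)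

/-- The representative in `(0, 1]^ι` of a point of the torus `(ℝ/ℤ)^ι`. -/
def torusRep (x : UnitAddTorus ι) : ι → ℝ := (UnitAddTorus.measurableEquivPiIoc (fun _ => 0) x).1

lemma toTorus_add (s t : ι → ℝ) : toTorus (s + t) = toTorus s + toTorus t := rfl

lemma toTorus_torusRep (x : UnitAddTorus ι) : toTorus (torusRep x) = x :=
  (UnitAddTorus.measurableEquivPiIoc (fun _ => 0)).symm_apply_apply x

lemma exists_torusRep_toTorus_eq (s : ι → ℝ) :
    ∃ k : ι → ℤ, torusRep (toTorus s) = fun i => s i + k i := by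
  have h_diff (i : ι) : ∃ k : ℤ, k • (1 : ℝ) = torusRep (toTorus s) i - s i := by
    rw [← AddCircle.coe_eq_zero_iff, AddCircle.coe_sub, sub_eq_zero]
    exact congrFun (toTorus_torusRep (toTorus s)) i
  choose k hk using h_diff
  refine ⟨k, funext fun i => ?_⟩
  rw [← sub_eq_iff_eq_add', ← hk i, zsmul_one]

lemma measurable_torusRep : Measurable (torusRep : UnitAddTorus ι → ι → ℝ) :=
  measurable_subtype_coe.comp (MeasurableEquiv.measurable _)

lemma isOpenQuotientMap_toTorus : IsOpenQuotientMap (toTorus : (ι → ℝ) → UnitAddTorus ι) :=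
  IsOpenQuotientMap.piMap (f := fun _ : ι => ((↑) : ℝ → UnitAddCircle))
    fun _ => QuotientAddGroup.isOpenQuotientMap_mk

variable [Fintype ι]

lemma mFourier_apply_add (k : ι → ℤ) (x y : UnitAddTorus ι) :
    UnitAddTorus.mFourier k (x + y) = UnitAddTorus.mFourier k x * UnitAddTorus.mFourier k y := by
  simp [UnitAddTorus.mFourier, fourier_apply, AddCircle.toCircle_add, Finset.prod_mul_distrib]

lemma mFourier_neg_apply_neg (k : ι → ℤ) (x : UnitAddTorus ι) :
    UnitAddTorus.mFourier (-k) (-x) = UnitAddTorus.mFourier k x := by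
  simp [UnitAddTorus.mFourier, fourier_apply]

/-- The Haar probability measure of the torus `(ℝ/ℤ)^ι`, with respect to which
`UnitAddTorus.mFourierCoeff` integrates. -/
abbrev torusHaar (ι : Type*) [Fintype ι] : Measure (UnitAddTorus ι) :=
  Measure.pi fun _ => AddCircle.haarAddCircle

variable {E : Type*} [NormedAddCommGroup E] [NormedSpace ℂ E] {F : UnitAddTorus ι → E}

lemma mFourierCoeff_eq_integral_torusHaar (F : UnitAddTorus ι → E) (k : ι → ℤ) :
    UnitAddTorus.mFourierCoeff F k = ∫ x, UnitAddTorus.mFourier (-k) x • F x ∂torusHaar ι := rfl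

lemma mFourierCoeff_zero (F : UnitAddTorus ι → E) :
    UnitAddTorus.mFourierCoeff F 0 = ∫ x, F x ∂torusHaar ι := by
  simp [mFourierCoeff_eq_integral_torusHaar, UnitAddTorus.mFourier_zero]

lemma norm_mFourierCoeff_le {M : ℝ} (hF : ∀ x, ‖F x‖ ≤ M) (k : ι → ℤ) :
    ‖UnitAddTorus.mFourierCoeff F k‖ ≤ M := by
  have h_le (x : UnitAddTorus ι) : ‖UnitAddTorus.mFourier (-k) x • F x‖ ≤ M := by
    have h_wave : ‖UnitAddTorus.mFourier (-k) x‖ ≤ 1 :=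
      ((UnitAddTorus.mFourier (-k)).norm_coe_le_norm x).trans UnitAddTorus.mFourier_norm.le
    rw [norm_smul]
    exact (mul_le_of_le_one_left (norm_nonneg _) h_wave).trans (hF x)
  simpa [mFourierCoeff_eq_integral_torusHaar] using
    norm_integral_le_of_norm_le_const (μ := torusHaar ι) (Filter.Eventually.of_forall h_le)

lemma mFourierCoeff_comp_add_right (F : UnitAddTorus ι → E) (a : UnitAddTorus ι) (k : ι → ℤ) :
    UnitAddTorus.mFourierCoeff (fun x => F (x + a)) k =
      UnitAddTorus.mFourier k a • UnitAddTorus.mFourierCoeff F k := by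
  calc ∫ x, UnitAddTorus.mFourier (-k) x • F (x + a) ∂torusHaar ι
      = ∫ x, UnitAddTorus.mFourier k a • UnitAddTorus.mFourier (-k) (x + a) • F (x + a)
          ∂torusHaar ι := by
        refine integral_congr_ae (Filter.Eventually.of_forall fun x => ?_)
        simp only [smul_smul]
        rw [← mFourier_neg_apply_neg k a, ← mFourier_apply_add, add_comm x a, neg_add_cancel_left]
    _ = UnitAddTorus.mFourier k a • ∫ x, UnitAddTorus.mFourier (-k) x • F x ∂torusHaar ι := by
        rw [integral_smul, integral_add_right_eq_self
          (fun x => UnitAddTorus.mFourier (-k) x • F x) a]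

lemma mFourierCoeff_eq_zero_of_add_invariant {a : UnitAddTorus ι} (hF : ∀ x, F (x + a) = F x)
    {k : ι → ℤ} (hk : UnitAddTorus.mFourier k a ≠ 1) : UnitAddTorus.mFourierCoeff F k = 0 := by
  have h_shift := mFourierCoeff_comp_add_right F a k
  simp only [hF] at h_shift
  have h_smul : (1 - UnitAddTorus.mFourier k a) • UnitAddTorus.mFourierCoeff F k = 0 := by
    rw [sub_smul, one_smul, ← h_shift, sub_self]
  exact (smul_eq_zero.1 h_smul).resolve_left (sub_ne_zero.2 hk.symm)

end Torus

section Strip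

variable {d : ℕ} {D D' : ℝ} {z w : Fin d → ℂ}

/-- The real point `2πs`, seen in `ℂ^d`: it turns the period `1` of `UnitAddTorus` into the
period `2π` of `Per`. -/
def realAngle : (Fin d → ℝ) →L[ℝ] (Fin d → ℂ) :=
  ContinuousLinearMap.pi fun i =>
    (2 * π) • Complex.ofRealCLM.comp (ContinuousLinearMap.proj (R := ℝ) i)

@[simp]
lemma realAngle_apply (s : Fin d → ℝ) (i : Fin d) : realAngle s i = 2 * π * (s i : ℂ) := by
  simp [realAngle]

lemma realAngle_inv_smul (s : Fin d → ℝ) :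
    realAngle ((2 * π)⁻¹ • s) = fun i => (s i : ℂ) := by
  have h_pi : (π : ℂ) ≠ 0 := by exact_mod_cast Real.pi_ne_zero
  funext i
  simp only [realAngle_apply, Pi.smul_apply, smul_eq_mul]
  push_cast
  field_simp

lemma zero_mem_strip (hD : 0 ≤ D) : (0 : Fin d → ℂ) ∈ strip d D := fun i => by simpa using hD

lemma strip_mono (h : D ≤ D') : strip d D ⊆ strip d D' := fun _ hz i => (hz i).trans h

lemma add_realAngle_mem_strip (hz : z ∈ strip d D) (s : Fin d → ℝ) :
    z + realAngle s ∈ strip d D := fun i => by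
  simpa using hz i

lemma mem_strip_of_mem_ball (hz : z ∈ strip d D) (hw : w ∈ Metric.ball z (D' - D)) :
    w ∈ strip d D' := by
  intro i
  have h_im : |(w i - z i).im| ≤ D' - D :=
    (Complex.abs_im_le_norm _).trans ((norm_le_pi_norm (w - z) i).trans (mem_ball_iff_norm.1 hw).le)
  have h_tri : |(w i).im| ≤ |(w i - z i).im| + |(z i).im| := by
    simpa using abs_add_le (w i - z i).im (z i).im
  linarith [hz i]

lemma strip_subset_interior_strip (h : D < D') : strip d D ⊆ interior (strip d D') := fun z hz =>
  mem_interior.2 ⟨Metric.ball z (D' - D), fun _ hw => mem_strip_of_mem_ball hz hw,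
    Metric.isOpen_ball, Metric.mem_ball_self (sub_pos.2 h)⟩

lemma convex_strip : Convex ℝ (strip d D) := by
  have h_iInter : strip d D = ⋂ i, {z : Fin d → ℂ | (z i).im ∈ Set.Icc (-D) D} := by
    ext z
    simp [strip, abs_le]
  rw [h_iInter]
  exact convex_iInter fun i => (convex_Icc (-D) D).linear_preimage
    (Complex.imLm.comp (LinearMap.proj (R := ℝ) (φ := fun _ : Fin d => ℂ) i))

lemma Per.exists_norm_le {f : (Fin d → ℂ) → ℂ} (hf : Per d f) (hc : ContinuousOn f (strip d D)) :
    ∃ M : ℝ, ∀ z ∈ strip d D, ‖f z‖ ≤ M := by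
  let box : Set (Fin d → ℂ) := Set.univ.pi fun _ => Set.Icc 0 (2 * π) ×ℂ Set.Icc (-D) D
  have h_compact : IsCompact box :=
    isCompact_univ_pi fun _ => isCompact_Icc.reProdIm isCompact_Icc
  have h_sub : box ⊆ strip d D := fun z hz i => abs_le.2 (hz i trivial).2
  obtain ⟨M, hM⟩ := h_compact.exists_bound_of_continuousOn (hc.mono h_sub)
  refine ⟨M, fun z hz => ?_⟩
  let k : Fin d → ℤ := fun i => -toIcoDiv Real.two_pi_pos 0 (z i).re
  rw [← hf z k]
  refine hM _ fun i _ => ⟨?_, ?_⟩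
  · have h_re : (z i + 2 * π * (k i : ℂ)).re = toIcoMod Real.two_pi_pos 0 (z i).re := by
      have h_mod := self_sub_toIcoDiv_zsmul Real.two_pi_pos 0 (z i).re
      rw [zsmul_eq_mul] at h_mod
      simp only [k, Int.cast_neg, mul_neg, add_re, neg_re, mul_re, re_ofNat, ofReal_re, im_ofNat,
        ofReal_im, mul_zero, sub_zero, intCast_re, mul_im, zero_mul, add_zero, intCast_im]
      linarith
    have h_mem := toIcoMod_mem_Ico' Real.two_pi_pos (z i).re
    exact ⟨h_re ▸ h_mem.1, h_re ▸ h_mem.2.le⟩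
  · simpa using abs_le.1 (hz i)

lemma norm_fderiv_le_of_mem_strip {f : (Fin d → ℂ) → ℂ} {M : ℝ}
    (hf : ∀ z ∈ strip d D', DifferentiableAt ℂ f z) (hM : ∀ z ∈ strip d D', ‖f z‖ ≤ M)
    (h : D < D') (hz : z ∈ strip d D) : ‖fderiv ℂ f z‖ ≤ 2 * M / (D' - D) := by
  have h_ball : Metric.ball z (D' - D) ⊆ strip d D' := fun _ hw => mem_strip_of_mem_ball hz hw
  refine Complex.norm_fderiv_le_div_of_mapsTo_ball
    (fun w hw => (hf w (h_ball hw)).differentiableWithinAt) (fun w hw => ?_) (sub_pos.2 h)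
  rw [mem_closedBall_iff_norm]
  linarith [norm_sub_le (f w) (f z), hM w (h_ball hw), hM z (strip_mono h.le hz)]

lemma eq_of_add_realAngle_invariant {f : (Fin d → ℂ) → ℂ}
    (hf : ∀ z ∈ strip d D, DifferentiableAt ℂ f z)
    (hinv : ∀ z ∈ strip d D, ∀ s, f (z + realAngle s) = f z)
    (hz : z ∈ strip d D) (hw : w ∈ strip d D) : f z = f w := by
  have h_real : ∀ z ∈ strip d D, ∀ s, fderiv ℂ f z (realAngle s) = 0 := by
    intro z hz s
    have h_line : HasLineDerivAt ℝ f (fderiv ℂ f z (realAngle s)) z (realAngle s) :=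
      ((hf z hz).hasFDerivAt.restrictScalars ℝ).hasLineDerivAt _
    have h_const : (fun t : ℝ => f (z + t • realAngle s)) = fun _ => f z := by
      funext t
      rw [← map_smul, hinv z hz]
    rw [HasLineDerivAt, h_const] at h_line
    exact h_line.unique (hasDerivAt_const _ _)
  have h_fderiv : ∀ z ∈ strip d D, fderiv ℂ f z = 0 := by
    intro z hz
    refine ContinuousLinearMap.coe_injective (LinearMap.pi_ext' fun j => LinearMap.ext_ring ?_)
    have h_single : realAngle ((2 * π)⁻¹ • Pi.single j 1) = (Pi.single j 1 : Fin d → ℂ) := by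
      rw [realAngle_inv_smul]
      funext i
      by_cases h : i = j <;> simp [h]
    have h_zero := h_real z hz ((2 * π)⁻¹ • Pi.single j 1)
    rwa [h_single] at h_zero
  have h_le := convex_strip.norm_image_sub_le_of_norm_fderiv_le (C := 0) hf
    (fun x hx => by simp [h_fderiv x hx]) hw hz
  simpa [sub_eq_zero] using h_le

lemma eq_add_realAngle_of_fderiv_eq_zero {f : (Fin d → ℂ) → ℂ} {s : Fin d → ℝ}
    (hf : ∀ z ∈ strip d D, DifferentiableAt ℂ f z)
    (hs : ∀ z ∈ strip d D, fderiv ℂ f z (realAngle s) = 0) (hz : z ∈ strip d D) (t : ℝ) :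
    f (z + realAngle (t • s)) = f z := by
  have h_deriv (t : ℝ) : HasDerivAt (fun t : ℝ => f (z + realAngle (t • s))) 0 t := by
    have h_mem := add_realAngle_mem_strip hz (t • s)
    have h_line : HasDerivAt (fun t : ℝ => z + realAngle (t • s)) (realAngle s) t := by
      simpa using ((hasDerivAt_id t).smul_const (realAngle s)).const_add z
    have h_chain := ((hf _ h_mem).hasFDerivAt.restrictScalars ℝ).comp_hasDerivAt t h_line
    rwa [ContinuousLinearMap.coe_restrictScalars', hs _ h_mem] at h_chain
  simpa using is_const_of_deriv_eq_zero (fun t => (h_deriv t).differentiableAt)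
    (fun t => (h_deriv t).deriv) t 0

end Strip

section TorusLift

variable {d : ℕ} {D D' : ℝ} {f : (Fin d → ℂ) → ℂ} {z : Fin d → ℂ}

/-- The function induced on the torus by the restriction of a periodic function to the horizontal
slice through `z`, namely `θ ↦ f (z + 2πθ)`. -/
def torusLift (f : (Fin d → ℂ) → ℂ) (z : Fin d → ℂ) (x : UnitAddTorus (Fin d)) : ℂ :=
  f (z + realAngle (torusRep x))

lemma torusLift_toTorus (hf : Per d f) (z : Fin d → ℂ) (s : Fin d → ℝ) :
    torusLift f z (toTorus s) = f (z + realAngle s) := by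
  obtain ⟨k, hk⟩ := exists_torusRep_toTorus_eq s
  rw [torusLift, hk, ← hf (z + realAngle s) k]
  congr 1
  funext i
  simp only [Pi.add_apply, realAngle_apply]
  push_cast
  ring

lemma torusLift_add_toTorus (hf : Per d f) (z : Fin d → ℂ) (s : Fin d → ℝ)
    (x : UnitAddTorus (Fin d)) :
    torusLift f z (x + toTorus s) = torusLift f (z + realAngle s) x := by
  rw [← toTorus_torusRep x, ← toTorus_add, torusLift_toTorus hf, torusLift_toTorus hf, map_add,
    add_assoc, add_comm (realAngle s)]

lemma continuous_torusLift (hf : Per d f) (hc : ∀ z ∈ strip d D, ContinuousAt f z)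
    (hz : z ∈ strip d D) : Continuous (torusLift f z) := by
  have h_comp : torusLift f z ∘ toTorus = fun s => f (z + realAngle s) :=
    funext (torusLift_toTorus hf z)
  rw [isOpenQuotientMap_toTorus.isQuotientMap.continuous_iff, h_comp, continuous_iff_continuousAt]
  exact fun s => ContinuousAt.comp (f := fun s => z + realAngle s)
    (hc _ (add_realAngle_mem_strip hz s)) (by fun_prop)

lemma integrable_torusLift (hf : Per d f) (hc : ∀ z ∈ strip d D, ContinuousAt f z)
    (hz : z ∈ strip d D) : Integrable (torusLift f z) (torusHaar (Fin d)) :=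
  (continuous_torusLift hf hc hz).integrable_of_hasCompactSupport (.of_compactSpace _)

lemma integral_torusLift_zero (hf : Per d f) :
    ∫ x, torusLift f 0 x ∂torusHaar (Fin d) =
      ((2 * π) ^ d)⁻¹ • ∫ θ in Set.Icc (0 : Fin d → ℝ) (fun _ => 2 * π), f fun i => (θ i : ℂ) := by
  open scoped Pointwise in
  have h_cube : (2 * π) • {s : Fin d → ℝ | ∀ i, s i ∈ Set.Ioc 0 (0 + 1)} =
      Set.univ.pi fun _ : Fin d => Set.Ioc 0 (2 * π) := by
    ext s
    simp only [Set.mem_smul_set_iff_inv_smul_mem₀ Real.two_pi_pos.ne', Set.mem_ofPred_eq,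
      Set.mem_pi, Set.mem_univ, true_imp_iff, Set.mem_Ioc, Pi.smul_apply, smul_eq_mul, zero_add,
      inv_mul_le_iff₀ Real.two_pi_pos, mul_one, mul_pos_iff_of_pos_left (inv_pos.2 Real.two_pi_pos)]
  have h_Icc : (Set.univ.pi fun _ : Fin d => Set.Ioc 0 (2 * π)) =ᵐ[volume]
      Set.Icc (0 : Fin d → ℝ) (fun _ => 2 * π) :=
    Measure.univ_pi_Ioc_ae_eq_Icc (μ := fun _ : Fin d => (volume : Measure ℝ))
  calc ∫ x, torusLift f 0 x ∂torusHaar (Fin d)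
      = ∫ s in {s : Fin d → ℝ | ∀ i, s i ∈ Set.Ioc 0 (0 + 1)}, torusLift f 0 (toTorus s) :=
        UnitAddTorus.integral_preimage (torusLift f 0) fun _ => 0
    _ = ∫ s in {s : Fin d → ℝ | ∀ i, s i ∈ Set.Ioc 0 (0 + 1)},
          f fun i => (((2 * π) • s) i : ℝ) := by
        refine integral_congr_ae (Filter.Eventually.of_forall fun s => ?_)
        simp only [torusLift_toTorus hf, zero_add]
        rw [← realAngle_inv_smul, inv_smul_smul₀ Real.two_pi_pos.ne']
    _ = ((2 * π) ^ d)⁻¹ •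
          ∫ θ in Set.Icc (0 : Fin d → ℝ) (fun _ => 2 * π), f fun i => (θ i : ℂ) := by
        rw [Measure.setIntegral_comp_smul_of_pos volume
          (fun θ : Fin d → ℝ => f fun i => (θ i : ℂ)) _ Real.two_pi_pos, h_cube,
          setIntegral_congr_set h_Icc, Module.finrank_fin_fun]

lemma ZeroAvg.integral_torusLift_eq_zero (h : ZeroAvg d f) (hf : Per d f) :
    ∫ x, torusLift f 0 x ∂torusHaar (Fin d) = 0 := by
  rw [integral_torusLift_zero hf, h, smul_zero]

lemma differentiableAt_integral_torusLift (hf : ∀ z ∈ strip d D', DifferentiableAt ℂ f z)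
    (hper : Per d f) (h : D < D') (hz : z ∈ strip d D) :
    DifferentiableAt ℂ (fun z => ∫ x, torusLift f z x ∂torusHaar (Fin d)) z := by
  have hc : ∀ z ∈ strip d D', ContinuousAt f z := fun z hz => (hf z hz).continuousAt
  obtain ⟨M, hM⟩ := hper.exists_norm_le fun z hz => (hc z hz).continuousWithinAt
  obtain ⟨r, hDr, hrD'⟩ := exists_between h
  have h_ball : ∀ w ∈ Metric.ball z (r - D), w ∈ strip d r := fun w hw =>
    mem_strip_of_mem_ball hz hw
  have h_nhds : Metric.ball z (r - D) ∈ nhds z := Metric.ball_mem_nhds z (sub_pos.2 hDr)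
  have h_meas : Measurable fun x : UnitAddTorus (Fin d) => z + realAngle (torusRep x) :=
    (realAngle.continuous.measurable.comp measurable_torusRep).const_add z
  exact (hasFDerivAt_integral_of_dominated_of_fderiv_le (𝕜 := ℂ)
    (F' := fun w x => fderiv ℂ f (w + realAngle (torusRep x)))
    (bound := fun _ => 2 * M / (D' - r)) h_nhds
    (Filter.eventually_of_mem h_nhds fun w hw =>
      (continuous_torusLift hper hc (strip_mono hrD'.le (h_ball w hw))).aestronglyMeasurable)
    (integrable_torusLift hper hc (strip_mono h.le hz))
    ((measurable_fderiv ℂ f).comp h_meas).aestronglyMeasurable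
    (Filter.Eventually.of_forall fun x w hw =>
      norm_fderiv_le_of_mem_strip hf hM hrD' (add_realAngle_mem_strip (h_ball w hw) _))
    (integrable_const _)
    (Filter.Eventually.of_forall fun x w hw => (hasFDerivAt_comp_add_right _).2
      (hf _ (add_realAngle_mem_strip (strip_mono hrD'.le (h_ball w hw)) _)).hasFDerivAt)
    ).differentiableAt

/-- The integral is holomorphic in `z` and invariant under real translations of `z`. -/
lemma integral_torusLift_eq (hf : ∀ z ∈ strip d D, DifferentiableAt ℂ f z) (hper : Per d f)
    (hD' : 0 ≤ D') (h : D' < D) (hz : z ∈ strip d D') :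
    ∫ x, torusLift f z x ∂torusHaar (Fin d) = ∫ x, torusLift f 0 x ∂torusHaar (Fin d) := by
  refine eq_of_add_realAngle_invariant
    (fun w hw => differentiableAt_integral_torusLift hf hper h hw) (fun w _ s => ?_) hz
    (zero_mem_strip hD')
  simp_rw [← torusLift_add_toTorus hper]
  exact integral_add_right_eq_self (μ := torusHaar (Fin d)) (torusLift f w) (toTorus s)

end TorusLift

section Frequency

variable {d : ℕ}

/-- The `ℓ¹` norm `|k₁| + ⋯ + |k_d|` of a frequency, dual to the sup norm that measures the width of
a strip. -/
def l1Norm (k : Fin d → ℤ) : ℝ := ∑ i, |(k i : ℝ)|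

lemma l1Norm_nonneg (k : Fin d → ℤ) : 0 ≤ l1Norm k := Finset.sum_nonneg fun _ _ => abs_nonneg _

lemma norm_le_l1Norm (k : Fin d → ℤ) : ‖(fun i => (k i : ℝ) : Fin d → ℝ)‖ ≤ l1Norm k :=
  (pi_norm_le_iff_of_nonneg (l1Norm_nonneg k)).2 fun i =>
    Finset.single_le_sum (f := fun i => |(k i : ℝ)|) (fun _ _ => abs_nonneg _) (Finset.mem_univ i)

lemma one_le_norm_intCast {k : Fin d → ℤ} (hk : k ≠ 0) :
    1 ≤ ‖(fun i => (k i : ℝ) : Fin d → ℝ)‖ := by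
  obtain ⟨i, hi⟩ := Function.ne_iff.1 hk
  have h_abs : (1 : ℝ) ≤ |(k i : ℝ)| := by exact_mod_cast Int.one_le_abs hi
  exact h_abs.trans (norm_le_pi_norm (fun i => (k i : ℝ)) i)

lemma summable_int_exp_neg_mul_abs {ε : ℝ} (hε : 0 < ε) :
    Summable fun m : ℤ => Real.exp (-(ε * |(m : ℝ)|)) := by
  have h_nat : Summable fun n : ℕ => Real.exp (-(ε * n)) :=
    (Real.summable_exp_nat_mul_iff.2 (neg_lt_zero.2 hε)).congr fun n => by ring_nf
  refine Summable.of_nat_of_neg ?_ ?_ <;> simpa using h_nat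

lemma summable_exp_neg_mul_l1Norm {ε : ℝ} (hε : 0 < ε) :
    Summable fun k : Fin d → ℤ => Real.exp (-(ε * l1Norm k)) := by
  induction d with
  | zero => exact Summable.of_finite
  | succ n ih =>
    rw [← (Fin.consEquiv fun _ => ℤ).summable_iff]
    refine ((summable_int_exp_neg_mul_abs hε).mul_of_nonneg ih (fun _ => (Real.exp_pos _).le)
      fun _ => (Real.exp_pos _).le).congr fun p => ?_
    simp [← Real.exp_add, Fin.consEquiv, l1Norm, Fin.sum_univ_succ, mul_add, add_comm]

lemma exists_mul_exp_neg_le_of_diophantine {c τ ε : ℝ} (hc : 0 < c) (hε : 0 < ε) {ω : Fin d → ℝ}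
    (hω : ∀ k : Fin d → ℤ, k ≠ 0 →
      c / ‖(fun i => (k i : ℝ) : Fin d → ℝ)‖ ^ τ ≤ |∑ i, ω i * (k i : ℝ)|) :
    ∃ K > 0, ∀ k : Fin d → ℤ, k ≠ 0 →
      K * Real.exp (-(ε * l1Norm k)) ≤ |∑ i, ω i * (k i : ℝ)| := by
  obtain ⟨N, hN⟩ := exists_nat_ge τ
  refine ⟨c * ε ^ N / N.factorial, by positivity, fun k hk => le_trans ?_ (hω k hk)⟩
  set r := ‖(fun i => (k i : ℝ) : Fin d → ℝ)‖
  have h_one : 1 ≤ r := one_le_norm_intCast hk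
  have h_pos : 0 < r := one_pos.trans_le h_one
  have h_rpow : r ^ τ ≤ r ^ N := by
    rw [← Real.rpow_natCast]
    exact Real.rpow_le_rpow_of_exponent_le h_one hN
  have h_exp : (ε * r) ^ N / N.factorial ≤ Real.exp (ε * l1Norm k) :=
    (Real.pow_div_factorial_le_exp _ (by positivity) N).trans
      (Real.exp_le_exp.2 (mul_le_mul_of_nonneg_left (norm_le_l1Norm k) hε.le))
  rw [Real.exp_neg, ← div_eq_mul_inv,
    div_le_div_iff₀ (Real.exp_pos _) (Real.rpow_pos_of_pos h_pos τ)]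
  calc c * ε ^ N / N.factorial * r ^ τ ≤ c * ε ^ N / N.factorial * r ^ N := by gcongr
    _ = c * ((ε * r) ^ N / N.factorial) := by rw [mul_pow]; ring
    _ ≤ c * Real.exp (ε * l1Norm k) := by gcongr

end Frequency

section PlaneWave

variable {d : ℕ}

/-- The linear form `z ↦ i k·z`, the exponent of the plane wave of frequency `k`. -/
def phase (k : Fin d → ℤ) : (Fin d → ℂ) →L[ℂ] ℂ :=
  I • ∑ i, (k i : ℂ) • (ContinuousLinearMap.proj i : (Fin d → ℂ) →L[ℂ] ℂ)

lemma phase_apply (k : Fin d → ℤ) (z : Fin d → ℂ) : phase k z = I * ∑ i, (k i : ℂ) * z i := by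
  simp [phase]

lemma phase_ofReal (k : Fin d → ℤ) (ω : Fin d → ℝ) :
    phase k (fun i => (ω i : ℂ)) = I * ((∑ i, ω i * (k i : ℝ) : ℝ) : ℂ) := by
  simp [phase_apply, mul_comm]

lemma norm_phase_le (k : Fin d → ℤ) : ‖phase k‖ ≤ l1Norm k := by
  refine ContinuousLinearMap.opNorm_le_bound _ (l1Norm_nonneg k) fun z => ?_
  rw [phase_apply, norm_mul, Complex.norm_I, one_mul, l1Norm, Finset.sum_mul]
  refine (norm_sum_le _ _).trans (Finset.sum_le_sum fun i _ => ?_)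
  rw [norm_mul, Complex.norm_intCast]
  exact mul_le_mul_of_nonneg_left (norm_le_pi_norm z i) (abs_nonneg _)

/-- The plane wave `z ↦ e^{i k·z}`, the holomorphic extension of the Fourier monomial of
frequency `k`. -/
def planeWave (k : Fin d → ℤ) (z : Fin d → ℂ) : ℂ := cexp (phase k z)

lemma planeWave_zero_right (k : Fin d → ℤ) : planeWave k 0 = 1 := by simp [planeWave]

lemma planeWave_add (k : Fin d → ℤ) (z w : Fin d → ℂ) :
    planeWave k (z + w) = planeWave k z * planeWave k w := by
  simp only [planeWave, map_add, Complex.exp_add]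

lemma planeWave_mul_planeWave_neg (k : Fin d → ℤ) (z : Fin d → ℂ) :
    planeWave k z * planeWave (-k) z = 1 := by
  simp [planeWave, ← Complex.exp_add, phase_apply]

lemma per_planeWave (k : Fin d → ℤ) : Per d (planeWave k) := by
  intro z m
  have h_phase : phase k (fun i => 2 * π * (m i : ℂ)) = (∑ i, k i * m i : ℤ) * (2 * π * I) := by
    rw [phase_apply]
    push_cast
    rw [Finset.mul_sum, Finset.sum_mul]
    exact Finset.sum_congr rfl fun i _ => by ring
  rw [planeWave_add, planeWave, planeWave, h_phase, Complex.exp_int_mul_two_pi_mul_I, mul_one]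

lemma hasFDerivAt_planeWave (k : Fin d → ℤ) (z : Fin d → ℂ) :
    HasFDerivAt (planeWave k) (planeWave k z • phase k) z :=
  (phase k).hasFDerivAt.cexp

lemma norm_planeWave (k : Fin d → ℤ) (z : Fin d → ℂ) :
    ‖planeWave k z‖ = Real.exp (-∑ i, (k i : ℝ) * (z i).im) := by
  simp [planeWave, phase_apply, Complex.norm_exp, Complex.im_sum]

lemma norm_planeWave_le {D : ℝ} (k : Fin d → ℤ) {z : Fin d → ℂ} (hz : z ∈ strip d D) :
    ‖planeWave k z‖ ≤ Real.exp (D * l1Norm k) := by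
  rw [norm_planeWave, Real.exp_le_exp, ← Finset.sum_neg_distrib, l1Norm, Finset.mul_sum]
  refine Finset.sum_le_sum fun i _ => (neg_le_abs _).trans ?_
  rw [abs_mul, mul_comm]
  exact mul_le_mul_of_nonneg_right (hz i) (abs_nonneg _)

lemma mFourier_toTorus (k : Fin d → ℤ) (s : Fin d → ℝ) :
    UnitAddTorus.mFourier k (toTorus s) = planeWave k (realAngle s) := by
  simp only [UnitAddTorus.mFourier, ContinuousMap.coe_mk, toTorus, fourier_coe_apply, planeWave,
    phase_apply, realAngle_apply, ← Complex.exp_sum, Finset.mul_sum]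
  congr 1
  refine Finset.sum_congr rfl fun i _ => ?_
  push_cast
  ring

end PlaneWave

section FourierCoefficients

variable {d : ℕ} {D D' : ℝ} {f : (Fin d → ℂ) → ℂ} {z : Fin d → ℂ}

lemma mFourierCoeff_torusLift_eq_integral (f : (Fin d → ℂ) → ℂ) (z : Fin d → ℂ) (k : Fin d → ℤ) :
    UnitAddTorus.mFourierCoeff (torusLift f z) k =
      planeWave k z * ∫ x, torusLift (planeWave (-k) * f) z x ∂torusHaar (Fin d) := by
  rw [mFourierCoeff_eq_integral_torusHaar, ← integral_const_mul]
  refine integral_congr_ae (Filter.Eventually.of_forall fun x => ?_)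
  have h_wave : UnitAddTorus.mFourier (-k) x = planeWave (-k) (realAngle (torusRep x)) := by
    rw [← mFourier_toTorus, toTorus_torusRep]
  simp only [torusLift, Pi.mul_apply, smul_eq_mul, planeWave_add, h_wave, ← mul_assoc,
    planeWave_mul_planeWave_neg, one_mul]

lemma mFourierCoeff_torusLift_eq (hf : ∀ z ∈ strip d D, DifferentiableAt ℂ f z) (hper : Per d f)
    (hD' : 0 ≤ D') (h : D' < D) (hz : z ∈ strip d D') (k : Fin d → ℤ) :
    UnitAddTorus.mFourierCoeff (torusLift f z) k =
      planeWave k z * UnitAddTorus.mFourierCoeff (torusLift f 0) k := by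
  have h_diff : ∀ z ∈ strip d D, DifferentiableAt ℂ (planeWave (-k) * f) z := fun z hz =>
    (hasFDerivAt_planeWave (-k) z).differentiableAt.mul (hf z hz)
  have h_per : Per d (planeWave (-k) * f) := fun z m => by
    simp only [Pi.mul_apply, per_planeWave (-k) z m, hper z m]
  rw [mFourierCoeff_torusLift_eq_integral, mFourierCoeff_torusLift_eq_integral,
    planeWave_zero_right, one_mul, integral_torusLift_eq h_diff h_per hD' h hz]

lemma norm_mFourierCoeff_torusLift_le_of_lt {M : ℝ}
    (hf : ∀ z ∈ strip d D, DifferentiableAt ℂ f z) (hper : Per d f)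
    (hM : ∀ z ∈ strip d D, ‖f z‖ ≤ M) (hD' : 0 ≤ D') (h : D' < D) (k : Fin d → ℤ) :
    ‖UnitAddTorus.mFourierCoeff (torusLift f 0) k‖ ≤ M * Real.exp (-(D' * l1Norm k)) := by
  -- Imaginary parts of sign opposite to `k` make `e^{i k·z}` as large as it gets on the strip.
  let z : Fin d → ℂ := fun i => ((-(D' * SignType.sign (k i : ℝ)) : ℝ) : ℂ) * I
  have h_im (i : Fin d) : (z i).im = -(D' * SignType.sign (k i : ℝ)) := by
    simp only [z, Complex.im_ofReal_mul, Complex.I_im, mul_one]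
  have hz : z ∈ strip d D' := by
    intro i
    rw [h_im, abs_neg, abs_mul, abs_of_nonneg hD']
    refine mul_le_of_le_one_right hD' ?_
    cases SignType.sign (k i : ℝ) <;> simp
  have h_wave : ‖planeWave k z‖ = Real.exp (D' * l1Norm k) := by
    rw [norm_planeWave, ← Finset.sum_neg_distrib, l1Norm, Finset.mul_sum]
    refine congrArg Real.exp (Finset.sum_congr rfl fun i _ => ?_)
    rw [h_im, ← self_mul_sign (k i : ℝ)]
    ring
  have h_le := norm_mFourierCoeff_le (F := torusLift f z)
    (fun x => hM _ (add_realAngle_mem_strip (strip_mono h.le hz) (torusRep x))) k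
  rw [mFourierCoeff_torusLift_eq hf hper hD' h hz, norm_mul, h_wave] at h_le
  rwa [Real.exp_neg, ← div_eq_mul_inv, le_div_iff₀' (Real.exp_pos _)]

lemma norm_mFourierCoeff_torusLift_le {M : ℝ}
    (hf : ∀ z ∈ strip d D, DifferentiableAt ℂ f z) (hper : Per d f)
    (hM : ∀ z ∈ strip d D, ‖f z‖ ≤ M) (hD : 0 < D) (k : Fin d → ℤ) :
    ‖UnitAddTorus.mFourierCoeff (torusLift f 0) k‖ ≤ M * Real.exp (-(D * l1Norm k)) := by
  have h_cont : Continuous fun r => M * Real.exp (-(r * l1Norm k)) := by fun_prop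
  refine ge_of_tendsto (h_cont.continuousWithinAt (s := Set.Iio D) (x := D)) ?_
  filter_upwards [Ioo_mem_nhdsLT hD] with r hr
  exact norm_mFourierCoeff_torusLift_le_of_lt hf hper hM hr.1.le hr.2 k

lemma hasSum_mFourierCoeff_torusLift (hf : ∀ z ∈ strip d D, ContinuousAt f z) (hper : Per d f)
    (hz : z ∈ strip d D) (hs : Summable (UnitAddTorus.mFourierCoeff (torusLift f z)))
    (s : Fin d → ℝ) :
    HasSum (fun k => UnitAddTorus.mFourierCoeff (torusLift f z) k * planeWave k (realAngle s))
      (f (z + realAngle s)) := by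
  have h_sum := UnitAddTorus.hasSum_mFourier_series_apply_of_summable
    (f := ⟨torusLift f z, continuous_torusLift hper hf hz⟩) hs (toTorus s)
  simpa [torusLift_toTorus hper, mFourier_toTorus] using h_sum

end FourierCoefficients

section TrigonometricSeries

variable {d : ℕ} {A D ρ : ℝ} {a : (Fin d → ℤ) → ℂ} {z : Fin d → ℂ}

lemma norm_mul_planeWave_le (ha : ∀ k, ‖a k‖ ≤ A * Real.exp (-(ρ * l1Norm k)))
    (hz : z ∈ strip d D) (k : Fin d → ℤ) :
    ‖a k * planeWave k z‖ ≤ A * Real.exp (-((ρ - D) * l1Norm k)) :=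
  calc ‖a k * planeWave k z‖ = ‖a k‖ * ‖planeWave k z‖ := norm_mul _ _
    _ ≤ A * Real.exp (-(ρ * l1Norm k)) * Real.exp (D * l1Norm k) :=
        mul_le_mul (ha k) (norm_planeWave_le k hz) (norm_nonneg _) ((norm_nonneg _).trans (ha k))
    _ = A * Real.exp (-((ρ - D) * l1Norm k)) := by
        rw [mul_assoc, ← Real.exp_add]
        ring_nf

lemma summable_mul_planeWave (ha : ∀ k, ‖a k‖ ≤ A * Real.exp (-(ρ * l1Norm k))) (h : D < ρ)
    (hz : z ∈ strip d D) : Summable fun k => a k * planeWave k z :=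
  .of_norm_bounded ((summable_exp_neg_mul_l1Norm (sub_pos.2 h)).mul_left A)
    (norm_mul_planeWave_le ha hz)

lemma norm_smul_planeWave_smul_phase_le (ha : ∀ k, ‖a k‖ ≤ A * Real.exp (-(ρ * l1Norm k)))
    (h : D < ρ) (hz : z ∈ strip d D) (k : Fin d → ℤ) :
    ‖a k • planeWave k z • phase k‖ ≤
      A * ((ρ - D) / 2)⁻¹ * Real.exp (-((ρ - D) / 2 * l1Norm k)) := by
  set ε := (ρ - D) / 2 with hε
  have h_pos : 0 < ε := half_pos (sub_pos.2 h)
  have h_phase : ‖phase k‖ ≤ ε⁻¹ * Real.exp (ε * l1Norm k) := by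
    refine (norm_phase_le k).trans ((le_inv_mul_iff₀ h_pos).2 ?_)
    linarith [Real.add_one_le_exp (ε * l1Norm k)]
  have h_term := norm_mul_planeWave_le ha hz k
  calc ‖a k • planeWave k z • phase k‖ = ‖a k * planeWave k z‖ * ‖phase k‖ := by
        rw [smul_smul, norm_smul]
    _ ≤ A * Real.exp (-((ρ - D) * l1Norm k)) * (ε⁻¹ * Real.exp (ε * l1Norm k)) :=
        mul_le_mul h_term h_phase (norm_nonneg _) ((norm_nonneg _).trans h_term)
    _ = A * ε⁻¹ * Real.exp (-(ε * l1Norm k)) := by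
        rw [mul_mul_mul_comm, ← Real.exp_add, hε]
        ring_nf

lemma summable_smul_planeWave_smul_phase (ha : ∀ k, ‖a k‖ ≤ A * Real.exp (-(ρ * l1Norm k)))
    (h : D < ρ) (hz : z ∈ strip d D) : Summable fun k => a k • planeWave k z • phase k :=
  .of_norm_bounded ((summable_exp_neg_mul_l1Norm (half_pos (sub_pos.2 h))).mul_left _)
    (norm_smul_planeWave_smul_phase_le ha h hz)

lemma hasFDerivAt_tsum_planeWave (ha : ∀ k, ‖a k‖ ≤ A * Real.exp (-(ρ * l1Norm k))) (h : D < ρ)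
    (hz : z ∈ strip d D) :
    HasFDerivAt (fun z => ∑' k, a k * planeWave k z) (∑' k, a k • planeWave k z • phase k) z := by
  obtain ⟨r, hDr, hrρ⟩ := exists_between h
  have h_mem : z ∈ interior (strip d r) := strip_subset_interior_strip hDr hz
  exact hasFDerivAt_tsum_of_isPreconnected
    ((summable_exp_neg_mul_l1Norm (half_pos (sub_pos.2 hrρ))).mul_left _) isOpen_interior
    convex_strip.interior.isPreconnected (fun k z _ => (hasFDerivAt_planeWave k z).const_mul (a k))
    (fun k z hz => norm_smul_planeWave_smul_phase_le ha hrρ (interior_subset hz) k) h_mem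
    (summable_mul_planeWave ha h hz) h_mem

lemma hasSum_fderiv_tsum_planeWave (ha : ∀ k, ‖a k‖ ≤ A * Real.exp (-(ρ * l1Norm k))) (h : D < ρ)
    (hz : z ∈ strip d D) (w : Fin d → ℂ) :
    HasSum (fun k => a k * planeWave k z * phase k w)
      (fderiv ℂ (fun z => ∑' k, a k * planeWave k z) z w) := by
  rw [(hasFDerivAt_tsum_planeWave ha h hz).fderiv]
  simpa only [ContinuousLinearMap.apply_apply, smul_apply, smul_eq_mul, mul_assoc] using
    (summable_smul_planeWave_smul_phase ha h hz).hasSum.mapL (ContinuousLinearMap.apply ℂ ℂ w)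

lemma per_tsum_planeWave (a : (Fin d → ℤ) → ℂ) : Per d fun z => ∑' k, a k * planeWave k z :=
  fun z m => by simp only [per_planeWave _ z m]

lemma hasSum_fourierSeries {f : (Fin d → ℂ) → ℂ} {Δ : ℝ}
    (hf : ∀ z ∈ strip d Δ, DifferentiableAt ℂ f z) (hper : Per d f) (hD : 0 ≤ D) (h : D < Δ)
    (hz : z ∈ strip d D) :
    HasSum (fun k => UnitAddTorus.mFourierCoeff (torusLift f 0) k * planeWave k z) (f z) := by
  have h_cont : ∀ z ∈ strip d Δ, ContinuousAt f z := fun z hz => (hf z hz).continuousAt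
  obtain ⟨M, hM⟩ := hper.exists_norm_le fun z hz => (h_cont z hz).continuousWithinAt
  have h_coeff (k : Fin d → ℤ) : UnitAddTorus.mFourierCoeff (torusLift f z) k =
      UnitAddTorus.mFourierCoeff (torusLift f 0) k * planeWave k z := by
    rw [mFourierCoeff_torusLift_eq hf hper hD h hz, mul_comm]
  have h_summable : Summable (UnitAddTorus.mFourierCoeff (torusLift f z)) :=
    (summable_mul_planeWave (norm_mFourierCoeff_torusLift_le hf hper hM (hD.trans_lt h)) h
      hz).congr fun k => (h_coeff k).symm
  simpa [h_coeff, planeWave_zero_right] using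
    hasSum_mFourierCoeff_torusLift h_cont hper (strip_mono h.le hz) h_summable 0

end TrigonometricSeries

section Existence

variable {d : ℕ} {D : ℝ} {ω : Fin d → ℝ} {g : (Fin d → ℂ) → ℂ}

lemma isSol_sub_average {F : (Fin d → ℂ) → ℂ} (hF : ∀ z ∈ strip d D, DifferentiableAt ℂ F z)
    (hper : Per d F) (hL : ∀ z ∈ strip d D, fderiv ℂ F z (fun i => (ω i : ℂ)) = g z) :
    IsSol d D ω g fun z =>
      F z - ⨍ θ in Set.Icc (0 : Fin d → ℝ) (fun _ => 2 * π), F fun i => (θ i : ℂ) := by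
  refine ⟨fun z hz => (hF z hz).sub_const _, fun z m => by simp only [hper z m], ?_, fun z hz => ?_⟩
  · have h_finite : IsFiniteMeasure
        (volume.restrict (Set.Icc (0 : Fin d → ℝ) (fun _ => 2 * π))) :=
      ⟨by simpa using isCompact_Icc.measure_lt_top⟩
    exact integral_sub_average _ _
  · rw [fderiv_sub_const, hL z hz]

lemma norm_div_phase_le {K M ε Δ : ℝ} (hK : 0 < K) {k : Fin d → ℤ} {b : ℂ}
    (hω : K * Real.exp (-(ε * l1Norm k)) ≤ ‖phase k fun i => (ω i : ℂ)‖)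
    (hb : ‖b‖ ≤ M * Real.exp (-(Δ * l1Norm k))) :
    ‖b / phase k fun i => (ω i : ℂ)‖ ≤ M / K * Real.exp (-((Δ - ε) * l1Norm k)) := by
  have h_pos : 0 < K * Real.exp (-(ε * l1Norm k)) := by positivity
  rw [norm_div]
  calc ‖b‖ / ‖phase k fun i => (ω i : ℂ)‖
      ≤ M * Real.exp (-(Δ * l1Norm k)) / (K * Real.exp (-(ε * l1Norm k))) :=
        div_le_div₀ ((norm_nonneg b).trans hb) hb h_pos hω
    _ = M / K * Real.exp (-((Δ - ε) * l1Norm k)) := by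
        rw [mul_div_mul_comm, ← Real.exp_sub]
        ring_nf

lemma exists_isSol {K ε Δ : ℝ} (hK : 0 < K) (hε : 0 ≤ ε) (hD : 0 ≤ D) (hΔ : D + ε < Δ)
    (hω : ∀ k : Fin d → ℤ, k ≠ 0 → K * Real.exp (-(ε * l1Norm k)) ≤ |∑ i, ω i * (k i : ℝ)|)
    (hg : ∀ z ∈ strip d Δ, DifferentiableAt ℂ g z) (hper : Per d g) (havg : ZeroAvg d g) :
    ∃ f, IsSol d D ω g f := by
  obtain ⟨M, hM⟩ := hper.exists_norm_le fun z hz => (hg z hz).continuousAt.continuousWithinAt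
  have hM_nonneg : 0 ≤ M := (norm_nonneg _).trans (hM 0 (zero_mem_strip (by linarith)))
  set b := UnitAddTorus.mFourierCoeff (torusLift g 0) with hb
  have hb_zero : b 0 = 0 := by
    rw [hb, mFourierCoeff_zero, havg.integral_torusLift_eq_zero hper]
  have h_divisor : ∀ k : Fin d → ℤ, k ≠ 0 →
      K * Real.exp (-(ε * l1Norm k)) ≤ ‖phase k fun i => (ω i : ℂ)‖ := fun k hk => by
    simpa only [phase_ofReal, norm_mul, Complex.norm_I, one_mul, Complex.norm_real,
      Real.norm_eq_abs] using hω k hk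
  let a : (Fin d → ℤ) → ℂ := fun k => b k / phase k fun i => (ω i : ℂ)
  have ha (k : Fin d → ℤ) : ‖a k‖ ≤ M / K * Real.exp (-((Δ - ε) * l1Norm k)) := by
    obtain rfl | hk := eq_or_ne k 0
    · simp only [a, hb_zero, zero_div, norm_zero]
      positivity
    · exact norm_div_phase_le hK (h_divisor k hk)
        (norm_mFourierCoeff_torusLift_le hg hper hM (by linarith) k)
  have h_solve (k : Fin d → ℤ) : a k * (phase k fun i => (ω i : ℂ)) = b k := by
    obtain rfl | hk := eq_or_ne k 0
    · simp only [a, hb_zero, zero_div, zero_mul]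
    · exact div_mul_cancel₀ _
        (norm_pos_iff.1 (lt_of_lt_of_le (by positivity) (h_divisor k hk)))
  have h_lt : D < Δ - ε := by linarith
  refine ⟨_, isSol_sub_average
    (fun z hz => (hasFDerivAt_tsum_planeWave ha h_lt hz).differentiableAt) (per_tsum_planeWave a)
    fun z hz => (hasSum_fderiv_tsum_planeWave ha h_lt hz _).unique ?_⟩
  refine (hasSum_fourierSeries hg hper hD (by linarith) hz).congr_fun fun k => ?_
  rw [mul_right_comm, h_solve]

end Existence

section Uniqueness

variable {d : ℕ} {D : ℝ} {ω : Fin d → ℝ} {v : (Fin d → ℂ) → ℂ} {z : Fin d → ℂ}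

lemma planeWave_half_period {k : Fin d → ℤ} (hk : ∑ i, ω i * (k i : ℝ) ≠ 0) :
    planeWave k (realAngle ((π / ∑ i, ω i * (k i : ℝ)) • (2 * π)⁻¹ • ω)) = -1 := by
  rw [planeWave, map_smul, realAngle_inv_smul, (phase k).map_smul_of_tower, phase_ofReal,
    Complex.real_smul, mul_left_comm, ← Complex.ofReal_mul, div_mul_cancel₀ _ hk, mul_comm,
    Complex.exp_pi_mul_I]

lemma mFourierCoeff_torusLift_eq_zero (hv : ∀ z ∈ strip d D, DifferentiableAt ℂ v z)
    (hper : Per d v) (hL : ∀ z ∈ strip d D, fderiv ℂ v z (fun i => (ω i : ℂ)) = 0)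
    (hz : z ∈ strip d D) {k : Fin d → ℤ} (hk : ∑ i, ω i * (k i : ℝ) ≠ 0) :
    UnitAddTorus.mFourierCoeff (torusLift v z) k = 0 := by
  let s : Fin d → ℝ := (π / ∑ i, ω i * (k i : ℝ)) • (2 * π)⁻¹ • ω
  have h_inv (x : UnitAddTorus (Fin d)) : torusLift v z (x + toTorus s) = torusLift v z x := by
    rw [torusLift_add_toTorus hper, torusLift, add_right_comm]
    refine eq_add_realAngle_of_fderiv_eq_zero hv ?_ (add_realAngle_mem_strip hz _) _
    rwa [realAngle_inv_smul]
  refine mFourierCoeff_eq_zero_of_add_invariant h_inv ?_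
  rw [mFourier_toTorus, planeWave_half_period hk]
  norm_num

lemma eq_zero_of_fderiv_eq_zero (hD : 0 ≤ D)
    (hω : ∀ k : Fin d → ℤ, k ≠ 0 → ∑ i, ω i * (k i : ℝ) ≠ 0)
    (hv : ∀ z ∈ strip d D, DifferentiableAt ℂ v z) (hper : Per d v)
    (havg : ∫ x, torusLift v 0 x ∂torusHaar (Fin d) = 0)
    (hL : ∀ z ∈ strip d D, fderiv ℂ v z (fun i => (ω i : ℂ)) = 0) (hz : z ∈ strip d D) :
    v z = 0 := by
  have h_slice : ∀ z ∈ strip d D, ∀ s,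
      v (z + realAngle s) = UnitAddTorus.mFourierCoeff (torusLift v z) 0 := by
    intro z hz s
    have h_coeff : ∀ k ≠ 0, UnitAddTorus.mFourierCoeff (torusLift v z) k = 0 := fun k hk =>
      mFourierCoeff_torusLift_eq_zero hv hper hL hz (hω k hk)
    have h_sum := hasSum_mFourierCoeff_torusLift (fun z hz => (hv z hz).continuousAt) hper hz
      (summable_of_ne_finset_zero (s := {0}) fun k hk => h_coeff k (by simpa using hk)) s
    rw [h_sum.unique (hasSum_single 0 fun k hk => by rw [h_coeff k hk, zero_mul])]
    simp [planeWave, phase_apply]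
  have h_base : ∀ z ∈ strip d D, v z = UnitAddTorus.mFourierCoeff (torusLift v z) 0 :=
    fun z hz => by simpa using h_slice z hz 0
  have h_zero := zero_mem_strip (d := d) hD
  calc v z = v 0 := eq_of_add_realAngle_invariant hv
        (fun z hz s => (h_slice z hz s).trans (h_base z hz).symm) hz h_zero
    _ = ∫ x, torusLift v 0 x ∂torusHaar (Fin d) := by rw [h_base 0 h_zero, mFourierCoeff_zero]
    _ = 0 := havg

lemma IsSol.eqOn {g f f' : (Fin d → ℂ) → ℂ} (hf : IsSol d D ω g f) (hf' : IsSol d D ω g f')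
    (hD : 0 ≤ D) (hω : ∀ k : Fin d → ℤ, k ≠ 0 → ∑ i, ω i * (k i : ℝ) ≠ 0) :
    Set.EqOn f f' (strip d D) := by
  obtain ⟨h_diff, h_per, h_avg, h_eq⟩ := hf
  obtain ⟨h_diff', h_per', h_avg', h_eq'⟩ := hf'
  have h_int : ∫ x, torusLift (f - f') 0 x ∂torusHaar (Fin d) = 0 := by
    have h_zero := zero_mem_strip (d := d) hD
    calc ∫ x, torusLift f 0 x - torusLift f' 0 x ∂torusHaar (Fin d)
        = ∫ x, torusLift f 0 x ∂torusHaar (Fin d) - ∫ x, torusLift f' 0 x ∂torusHaar (Fin d) :=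
          integral_sub (integrable_torusLift h_per (fun z hz => (h_diff z hz).continuousAt) h_zero)
            (integrable_torusLift h_per' (fun z hz => (h_diff' z hz).continuousAt) h_zero)
      _ = 0 := by
          rw [h_avg.integral_torusLift_eq_zero h_per, h_avg'.integral_torusLift_eq_zero h_per',
            sub_zero]
  refine fun z hz => sub_eq_zero.1 (eq_zero_of_fderiv_eq_zero hD hω
    (fun z hz => (h_diff z hz).sub (h_diff' z hz))
    (fun z m => by simp only [Pi.sub_apply, h_per z m, h_per' z m]) h_int (fun z hz => ?_) hz)
  rw [fderiv_sub (h_diff z hz) (h_diff' z hz), sub_apply, h_eq z hz, h_eq' z hz, sub_self]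

end Uniqueness

theorem stmt0_general {d : ℕ} {K ε Δ Δ' : ℝ} (hK : 0 < K) (hε : 0 ≤ ε) (hΔ' : 0 ≤ Δ')
    (hΔ : Δ' + ε < Δ) {ω : Fin d → ℝ}
    (hω : ∀ k : Fin d → ℤ, k ≠ 0 → K * Real.exp (-(ε * l1Norm k)) ≤ |∑ i, ω i * (k i : ℝ)|)
    {g : (Fin d → ℂ) → ℂ} (hg_hol : ∀ z ∈ strip d Δ, DifferentiableAt ℂ g z) (hg_per : Per d g)
    (hg_avg : ZeroAvg d g) :
    ∃ f : (Fin d → ℂ) → ℂ, IsSol d Δ' ω g f ∧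
      ∀ f' : (Fin d → ℂ) → ℂ, IsSol d Δ' ω g f' → Set.EqOn f f' (strip d Δ') := by
  obtain ⟨f, hf⟩ := exists_isSol hK hε hΔ' hΔ hω hg_hol hg_per hg_avg
  have h_ne : ∀ k : Fin d → ℤ, k ≠ 0 → ∑ i, ω i * (k i : ℝ) ≠ 0 := fun k hk =>
    abs_pos.1 (lt_of_lt_of_le (by positivity) (hω k hk))
  exact ⟨f, hf, fun f' hf' => hf.eqOn hf' hΔ' h_ne⟩

/-- **Fundamental lemma (existence and uniqueness).** -/
theorem stmt0 (d : ℕ) (hd : 1 ≤ d) (c τ Δ δ : ℝ) (hc : 0 < c) (hτ : (d : ℝ) - 1 < τ)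
    (hδ : 0 < δ) (hδΔ : δ < Δ)
    (ω : Fin d → ℝ)
    (hω : ∀ k : Fin d → ℤ, k ≠ 0 →
      c / ‖(fun i => (k i : ℝ) : Fin d → ℝ)‖ ^ τ ≤ |∑ i, ω i * (k i : ℝ)|)
    (g : (Fin d → ℂ) → ℂ)
    (hg_hol : ∀ z ∈ strip d Δ, DifferentiableAt ℂ g z)
    (hg_per : Per d g)
    (hg_bdd : ∃ M : ℝ, ∀ z ∈ strip d Δ, ‖g z‖ ≤ M)
    (hg_avg : ZeroAvg d g) :
    ∃ f : (Fin d → ℂ) → ℂ, IsSol d (Δ - δ) ω g f ∧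
      ∀ f' : (Fin d → ℂ) → ℂ, IsSol d (Δ - δ) ω g f' →
        Set.EqOn f f' (strip d (Δ - δ)) := by
  obtain ⟨K, hK, hωK⟩ := exists_mul_exp_neg_le_of_diophantine hc (half_pos hδ) hω
  exact stmt0_general hK (half_pos hδ).le (sub_pos.2 hδΔ).le (by linarith) hωK hg_hol hg_per hg_avg
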